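/- arXiv:2209.13784 — 2 statements merged into one kernel-verified Lean document; each statement's English description precedes it below -/
import Mathlib

section
/- For all positive integers a and m and every nonnegative integer n, cp^o_{a,a,m}(n) ≤ cp^e_{a,a,m}(n). -/
/-- `(γ, ρ, σ)` is an `(a,b,m)`-copartition. -/
def IsCopartition (a b m : ℕ) (γ ρ σ : Multiset ℕ) : Prop :=
  (∀ x ∈ γ, a ≤ x ∧ x % m = a % m) ∧
  (∀ x ∈ σ, b ≤ x ∧ x % m = b % m) ∧
  ρ = Multiset.replicate (Multiset.card σ) (m * Multiset.card γ)

/-- The set of `(a,b,m)`-copartitions of size `n`. -/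
def cpSet (a b m n : ℕ) : Set (Multiset ℕ × Multiset ℕ × Multiset ℕ) :=
  {t | IsCopartition a b m t.1 t.2.1 t.2.2 ∧ t.1.sum + t.2.1.sum + t.2.2.sum = n}

/-- `cp^o_{a,b,m}(n)`. -/
noncomputable def cpOdd (a b m n : ℕ) : ℕ :=
  {t ∈ cpSet a b m n | Odd (Multiset.card t.1)}.ncard

/-- `cp^e_{a,b,m}(n)`. -/
noncomputable def cpEven (a b m n : ℕ) : ℕ :=
  {t ∈ cpSet a b m n | Even (Multiset.card t.1)}.ncard

/-- Multisets of naturals with `k` elements and sum `s`. -/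
def mset (k s : ℕ) : Set (Multiset ℕ) := {μ | Multiset.card μ = k ∧ μ.sum = s}

theorem sum_map_succ (μ : Multiset ℕ) :
    (μ.map Nat.succ).sum = μ.sum + Multiset.card μ := by
  induction μ using Multiset.induction_on with
  | empty => simp
  | cons x μ ih => simp only [Multiset.map_cons, Multiset.sum_cons, ih, Multiset.card_cons]; omega

theorem mset_succ (k s : ℕ) : mset (k+1) s =
    (Multiset.cons 0 '' mset k s) ∪
      (if k + 1 ≤ s then Multiset.map Nat.succ '' mset (k+1) (s - (k+1)) else ∅) := by
  ext μ
  constructor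
  · rintro ⟨h1, h2⟩
    by_cases h0 : 0 ∈ μ
    · left
      obtain ⟨ν, rfl⟩ := Multiset.exists_cons_of_mem h0
      refine ⟨ν, ⟨by simpa using h1, by simpa using h2⟩, rfl⟩
    · right
      have hμ : (μ.map Nat.pred).map Nat.succ = μ := by
        rw [Multiset.map_map]
        conv_rhs => rw [← Multiset.map_id μ]
        apply Multiset.map_congr rfl
        intro x hx
        have : x ≠ 0 := fun h => h0 (h ▸ hx)
        simp only [Function.comp, id]; exact Nat.succ_pred this
      have hs := sum_map_succ (μ.map Nat.pred)
      rw [hμ, Multiset.card_map, h1, h2] at hs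
      rw [if_pos (by omega)]
      refine ⟨μ.map Nat.pred, ⟨by simpa using h1, by omega⟩, hμ⟩
  · rintro (⟨ν, ⟨h1, h2⟩, rfl⟩ | h)
    · exact ⟨by simpa using h1, by simpa using h2⟩
    · split_ifs at h with hk
      · obtain ⟨ν, ⟨h1, h2⟩, rfl⟩ := h
        refine ⟨by simpa using h1, ?_⟩
        rw [sum_map_succ]; omega
      · exact h.elim

theorem mset_finite (k s : ℕ) : (mset k s).Finite := by
  induction k generalizing s with
  | zero =>
    apply (Set.finite_singleton (0 : Multiset ℕ)).subset
    rintro μ ⟨h, -⟩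
    simpa using h
  | succ k ih =>
    induction s using Nat.strong_induction_on with
    | _ s ihs =>
      rw [mset_succ]
      refine ((ih s).image _).union ?_
      split_ifs with h
      · exact (ihs _ (by omega)).image _
      · exact Set.finite_empty

noncomputable def pc (k s : ℕ) : ℕ := (mset k s).ncard

theorem pc_succ (k s : ℕ) : pc (k+1) s =
    pc k s + if k + 1 ≤ s then pc (k+1) (s-(k+1)) else 0 := by
  unfold pc
  rw [mset_succ, Set.ncard_union_eq ?_ ?_ ?_]
  · congr 1
    · exact Set.ncard_image_of_injective _ (fun x y h => (Multiset.cons_inj_right 0).1 h)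
    · split_ifs
      · exact Set.ncard_image_of_injective _ (Multiset.map_injective Nat.succ_injective)
      · simp
  · rw [Set.disjoint_left]
    rintro _ ⟨ν, -, rfl⟩ h
    split_ifs at h
    · obtain ⟨μ, -, h⟩ := h
      have : 0 ∈ Multiset.map Nat.succ μ := h ▸ Multiset.mem_cons_self 0 ν
      simp at this
    · exact h.elim
  · exact (mset_finite k s).image _
  · split_ifs
    · exact (mset_finite _ _).image _
    · exact Set.finite_empty

open PowerSeries

noncomputable def PP (k : ℕ) : ℤ⟦X⟧ := PowerSeries.mk fun s => (pc k s : ℤ)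

theorem PP_succ (k : ℕ) : (1 - X^(k+1)) * PP (k+1) = PP k := by
  ext s
  rw [sub_mul, one_mul, map_sub, coeff_X_pow_mul']
  simp only [PP, coeff_mk]
  rw [pc_succ k s]
  push_cast
  ring

noncomputable def FF (k l : ℕ) : ℤ⟦X⟧ := X^(k*l) * PP k * PP l

theorem FF_left (k l : ℕ) : (1 - X^(k+1)) * FF (k+1) l = X^l * FF k l := by
  unfold FF
  rw [← PP_succ k]; ring

theorem FF_right (k l : ℕ) : (1 - X^(l+1)) * FF k (l+1) = X^k * FF k l := by
  unfold FF
  rw [← PP_succ l]; ring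

/-- The twisted sums. -/
noncomputable def SS (i j N : ℕ) : ℤ⟦X⟧ :=
  ∑ p ∈ Finset.HasAntidiagonal.antidiagonal N, (-1)^p.1 * X^(i*p.1+j*p.2) * FF p.1 p.2

theorem SS_left_zero (i j : ℕ) : SS i j 0 - SS (i+1) j 0 = 0 := by simp [SS]
theorem SS_right_zero (i j : ℕ) : SS i j 0 - SS i (j+1) 0 = 0 := by simp [SS]

theorem SS_left (i j N : ℕ) : SS i j (N+1) - SS (i+1) j (N+1) = - (X^i * SS i (j+1) N) := by
  unfold SS
  rw [← Finset.sum_sub_distrib, Finset.Nat.sum_antidiagonal_succ, Finset.mul_sum,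
    ← Finset.sum_neg_distrib]
  simp only [mul_zero, zero_add, sub_self]
  apply Finset.sum_congr rfl
  rintro ⟨k, l⟩ -
  have := FF_left k l
  simp only
  linear_combination (-1)^(k+1) * X^(i*(k+1)+j*l) * this

theorem SS_right (i j N : ℕ) : SS i j (N+1) - SS i (j+1) (N+1) = X^j * SS (i+1) j N := by
  unfold SS
  rw [← Finset.sum_sub_distrib, Finset.Nat.sum_antidiagonal_succ', Finset.mul_sum]
  simp only [mul_zero, add_zero, sub_self]
  rw [zero_add]
  apply Finset.sum_congr rfl
  rintro ⟨k, l⟩ -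
  have := FF_right k l
  simp only
  linear_combination (-1)^(k) * X^(i*k+j*(l+1)) * this

theorem SS_one_one (N : ℕ) : SS 1 1 N = X^N * SS 0 0 N := by
  unfold SS
  rw [Finset.mul_sum]
  apply Finset.sum_congr rfl
  rintro ⟨k, l⟩ h
  rw [Finset.HasAntidiagonal.mem_antidiagonal] at h
  simp only at h ⊢
  rw [← h]; ring

noncomputable def GG (i j : ℕ) : ℤ⟦X⟧⟦X⟧ := PowerSeries.mk (SS i j)

theorem GG_left (i j : ℕ) : GG i j - GG (i+1) j = - (C (X^i) * (X * GG i (j+1))) := by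
  ext1 N
  rw [map_sub, map_neg, coeff_C_mul]
  cases N with
  | zero => simp [GG, SS]
  | succ N => rw [coeff_succ_X_mul]; simp only [GG, coeff_mk]; exact SS_left i j N

theorem GG_right (i j : ℕ) : GG i j - GG i (j+1) = C (X^j) * (X * GG (i+1) j) := by
  ext1 N
  rw [map_sub, coeff_C_mul]
  cases N with
  | zero => simp [GG, SS]
  | succ N => rw [coeff_succ_X_mul]; simp only [GG, coeff_mk]; exact SS_right i j N

theorem GG_main : GG 0 0 - X^2 * GG 0 0 =
    GG 1 1 + C (1 + X) * (X^2 * GG 1 1) + C X * (X^4 * GG 1 1) := by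
  have h1 := GG_left 0 0
  have h2 := GG_right 0 0
  have h3 := GG_right 1 0
  have h4 := GG_left 1 0
  simp only [pow_zero, pow_one, map_one, one_mul, zero_add, Nat.reduceAdd] at h1 h2 h3 h4
  simp only [map_add, map_one]
  have e1 : (1 + X) * GG 0 0 = (1 + X^2) * GG 1 0 := by
    linear_combination h1 + X * h2
  have e2 : (1 - X) * GG 1 0 = (1 + C X * X^2) * GG 1 1 := by
    linear_combination h3 - X * h4
  linear_combination (1 - X) * e1 + (1 + X^2) * e2

def Nng (f : ℤ⟦X⟧) : Prop := ∀ n, 0 ≤ coeff n f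

theorem Nng.add {f g : ℤ⟦X⟧} (hf : Nng f) (hg : Nng g) : Nng (f + g) := fun n => by
  rw [map_add]; exact add_nonneg (hf n) (hg n)

theorem Nng.xpow {f : ℤ⟦X⟧} (hf : Nng f) (k : ℕ) : Nng (X^k * f) := fun n => by
  rw [coeff_X_pow_mul']; split_ifs
  · exact hf _
  · exact le_rfl

theorem Nng.zero : Nng 0 := fun n => by simp

theorem Nng.of_mul {f : ℤ⟦X⟧} {N : ℕ} (hN : 0 < N) (h : Nng (f - X^N * f)) : Nng f := by
  intro n
  induction n using Nat.strong_induction_on with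
  | _ n ih =>
    have := h n
    rw [map_sub, coeff_X_pow_mul'] at this
    split_ifs at this with hn
    · have := ih (n - N) (by omega)
      omega
    · omega

theorem SS_rec (N : ℕ) : SS 0 0 N - X^N * SS 0 0 N =
    (if 2 ≤ N then SS 0 0 (N-2) + X^(N-2) * SS 0 0 (N-2) + X^1 * (X^(N-2) * SS 0 0 (N-2)) else 0)
    + (if 4 ≤ N then X^1 * (X^(N-4) * SS 0 0 (N-4)) else 0) := by
  have h := congrArg (coeff N) GG_main
  simp only [map_sub, map_add (coeff N), coeff_C_mul, coeff_X_pow_mul', GG, coeff_mk,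
    SS_one_one] at h
  split_ifs at h ⊢ <;> linear_combination h

theorem pc_zero_zero : pc 0 0 = 1 := by
  have : mset 0 0 = {0} := by ext μ; simp [mset]; rintro rfl; rfl
  rw [pc, this, Set.ncard_singleton]

theorem SS_nonneg (N : ℕ) : Nng (SS 0 0 N) := by
  induction N using Nat.strong_induction_on with
  | _ N ih =>
    rcases Nat.eq_zero_or_pos N with rfl | hN
    · intro n
      simp only [SS, Finset.Nat.antidiagonal_zero, Finset.sum_singleton, FF, PP]
      simp only [mul_zero, pow_zero, one_mul, add_zero]
      rw [coeff_mul]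
      apply Finset.sum_nonneg
      intros
      simp only [coeff_mk]; positivity
    · apply Nng.of_mul hN
      rw [SS_rec]
      apply Nng.add
      · split_ifs
        · have := ih (N-2) (by omega)
          exact (this.add (this.xpow _)).add ((this.xpow _).xpow _)
        · exact Nng.zero
      · split_ifs
        · have := ih (N-4) (by omega)
          exact (this.xpow _).xpow _
        · exact Nng.zero

/-- Pairs with prescribed cardinalities and total weight. -/
def prs (k l T : ℕ) : Set (Multiset ℕ × Multiset ℕ) :=
  {p | Multiset.card p.1 = k ∧ Multiset.card p.2 = l ∧ p.1.sum + p.2.sum + k * l = T}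

noncomputable def msF (k s : ℕ) : Finset (Multiset ℕ) := (mset_finite k s).toFinset

theorem mem_msF (k s : ℕ) (μ) : μ ∈ msF k s ↔ Multiset.card μ = k ∧ μ.sum = s := by
  simp [msF, mset]

theorem card_msF (k s : ℕ) : (msF k s).card = pc k s := by
  rw [msF, pc, Set.ncard_eq_toFinset_card _ (mset_finite k s)]

open Classical in
noncomputable def prF (k l T : ℕ) : Finset (Multiset ℕ × Multiset ℕ) :=
  if k * l ≤ T then
    (Finset.HasAntidiagonal.antidiagonal (T - k*l)).biUnion fun p => msF k p.1 ×ˢ msF l p.2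
  else ∅

theorem mem_prF (k l T : ℕ) (p : Multiset ℕ × Multiset ℕ) : p ∈ prF k l T ↔
    Multiset.card p.1 = k ∧ Multiset.card p.2 = l ∧ p.1.sum + p.2.sum + k * l = T := by
  unfold prF
  split_ifs with h
  · simp only [Finset.mem_biUnion, Finset.HasAntidiagonal.mem_antidiagonal, Finset.mem_product, mem_msF]
    constructor
    · rintro ⟨⟨s, t⟩, h1, ⟨h2, h3⟩, h4, h5⟩
      simp only at *
      exact ⟨h2, h4, by omega⟩
    · rintro ⟨h1, h2, h3⟩
      exact ⟨(p.1.sum, p.2.sum), by simp only; omega, ⟨h1, rfl⟩, h2, rfl⟩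
  · simp only [Finset.notMem_empty, false_iff]
    rintro ⟨_, _, h3⟩; omega

theorem card_prF (k l T : ℕ) : ((prF k l T).card : ℤ) = coeff T (FF k l) := by
  unfold prF FF
  rw [mul_assoc, coeff_X_pow_mul']
  split_ifs
  · classical
    rw [Finset.card_biUnion, coeff_mul]
    · push_cast
      apply Finset.sum_congr rfl
      intros
      simp [PP, card_msF]
    · rintro ⟨s, t⟩ _ ⟨s', t'⟩ _ hne
      rw [Function.onFun, Finset.disjoint_left]
      rintro ⟨μ, ν⟩ h1 h2
      simp only [Finset.mem_product, mem_msF] at h1 h2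
      apply hne
      rw [← h1.1.2, ← h1.2.2, ← h2.1.2, ← h2.2.2]
  · simp

open Classical in
noncomputable def VV (N T : ℕ) : Finset (Multiset ℕ × Multiset ℕ) :=
  (Finset.HasAntidiagonal.antidiagonal N).biUnion fun p => prF p.1 p.2 T

theorem mem_VV (N T : ℕ) (p : Multiset ℕ × Multiset ℕ) : p ∈ VV N T ↔
    Multiset.card p.1 + Multiset.card p.2 = N ∧
      p.1.sum + p.2.sum + Multiset.card p.1 * Multiset.card p.2 = T := by
  simp only [VV, Finset.mem_biUnion, mem_prF, Finset.HasAntidiagonal.mem_antidiagonal]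
  constructor
  · rintro ⟨⟨k, l⟩, h1, h2, h3, h4⟩
    simp only at *
    subst h2 h3
    exact ⟨h1, h4⟩
  · rintro ⟨h1, h2⟩
    exact ⟨(_, _), h1, rfl, rfl, h2⟩

theorem sum_VV (N T : ℕ) : 0 ≤ ∑ p ∈ VV N T, (-1 : ℤ)^(Multiset.card p.1) := by
  have h := SS_nonneg N T
  convert h using 1
  rw [VV, Finset.sum_biUnion, SS, map_sum]
  · apply Finset.sum_congr rfl
    rintro ⟨k, l⟩ -
    have : ∀ p ∈ prF k l T, (-1 : ℤ)^(Multiset.card p.1) = (-1)^k := by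
      intro p hp
      rw [((mem_prF _ _ _ _).1 hp).1]
    rw [Finset.sum_congr rfl this, Finset.sum_const, nsmul_eq_mul, card_prF]
    simp only [zero_mul, add_zero, pow_zero, mul_one]
    have : ((-1 : ℤ⟦X⟧)^k) = C ((-1)^k) := by simp
    rw [this, coeff_C_mul, mul_comm]
  · rintro ⟨s, t⟩ _ ⟨s', t'⟩ _ hne
    rw [Function.onFun, Finset.disjoint_left]
    rintro ⟨μ, ν⟩ h1 h2
    simp only [mem_prF] at h1 h2
    apply hne
    rw [← h1.1, ← h1.2.1, ← h2.1, ← h2.2.1]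

open Classical in
noncomputable def WW (a m n : ℕ) : Finset (Multiset ℕ × Multiset ℕ) :=
  ((Finset.range (n+1) ×ˢ Finset.range (n+1)).filter fun q => a * q.1 + m * q.2 = n).biUnion
    fun q => VV q.1 q.2

theorem sum_WW (a m n : ℕ) : 0 ≤ ∑ p ∈ WW a m n, (-1 : ℤ)^(Multiset.card p.1) := by
  rw [WW, Finset.sum_biUnion]
  · exact Finset.sum_nonneg fun q _ => sum_VV _ _
  · rintro ⟨s, t⟩ _ ⟨s', t'⟩ _ hne
    rw [Function.onFun, Finset.disjoint_left]
    rintro ⟨μ, ν⟩ h1 h2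
    simp only [mem_VV] at h1 h2
    apply hne
    rw [← h1.1, ← h1.2, ← h2.1, ← h2.2]

theorem mem_WW (a m n : ℕ) (ha : 0 < a) (hm : 0 < m) (p : Multiset ℕ × Multiset ℕ) :
    p ∈ WW a m n ↔ a * (Multiset.card p.1 + Multiset.card p.2) +
      m * (p.1.sum + p.2.sum + Multiset.card p.1 * Multiset.card p.2) = n := by
  simp only [WW, Finset.mem_biUnion, mem_VV, Finset.mem_filter, Finset.mem_product,
    Finset.mem_range]
  constructor
  · rintro ⟨⟨N, T⟩, ⟨_, h⟩, h1, h2⟩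
    simp only at *
    rw [h1, h2, h]
  · intro h
    refine ⟨(_, _), ⟨⟨?_, ?_⟩, h⟩, rfl, rfl⟩
    · simp only
      have := Nat.le_mul_of_pos_left (Multiset.card p.1 + Multiset.card p.2) ha
      omega
    · simp only
      have := Nat.le_mul_of_pos_left
        (p.1.sum + p.2.sum + Multiset.card p.1 * Multiset.card p.2) hm
      omega

def up (a m : ℕ) (μ : Multiset ℕ) : Multiset ℕ := μ.map fun x => a + m * x

theorem up_inj (a m : ℕ) (hm : 0 < m) : Function.Injective (up a m) := by
  apply Multiset.map_injective
  intro x y h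
  simp only at h
  exact Nat.eq_of_mul_eq_mul_left hm (by omega)

theorem card_up (a m : ℕ) (μ) : Multiset.card (up a m μ) = Multiset.card μ := by simp [up]

theorem sum_up (a m : ℕ) (μ) : (up a m μ).sum = a * Multiset.card μ + m * μ.sum := by
  induction μ using Multiset.induction_on with
  | empty => simp [up]
  | cons x μ ih =>
    simp only [up, Multiset.map_cons, Multiset.sum_cons, Multiset.card_cons] at ih ⊢
    rw [ih]; ring

theorem up_prop (a m : ℕ) (μ) : ∀ x ∈ up a m μ, a ≤ x ∧ x % m = a % m := by
  intro x hx
  simp only [up, Multiset.mem_map] at hx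
  obtain ⟨y, _, rfl⟩ := hx
  simp

theorem up_surj (a m : ℕ) (γ : Multiset ℕ) (h : ∀ x ∈ γ, a ≤ x ∧ x % m = a % m) :
    ∃ μ, up a m μ = γ := by
  refine ⟨γ.map fun x => (x - a) / m, ?_⟩
  rw [up, Multiset.map_map]
  conv_rhs => rw [← Multiset.map_id γ]
  apply Multiset.map_congr rfl
  intro x hx
  obtain ⟨h1, h2⟩ := h x hx
  have : m ∣ x - a := (Nat.modEq_iff_dvd' h1).1 h2.symm
  simp only [Function.comp, id]
  rw [Nat.mul_div_cancel' this]; omega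

def Phi (a m : ℕ) (p : Multiset ℕ × Multiset ℕ) : Multiset ℕ × Multiset ℕ × Multiset ℕ :=
  (up a m p.1, Multiset.replicate (Multiset.card p.2) (m * Multiset.card p.1), up a m p.2)

theorem Phi_inj (a m : ℕ) (hm : 0 < m) : Function.Injective (Phi a m) := by
  rintro ⟨μ, ν⟩ ⟨μ', ν'⟩ h
  simp only [Phi, Prod.mk.injEq] at h
  rw [up_inj a m hm h.1, up_inj a m hm h.2.2]

theorem cpSet_eq (a m n : ℕ) (ha : 0 < a) (hm : 0 < m) :
    cpSet a a m n = Phi a m '' (WW a m n : Set (Multiset ℕ × Multiset ℕ)) := by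
  ext ⟨γ, ρ, σ⟩
  simp only [cpSet, IsCopartition, Set.mem_setOf_eq, Set.mem_image, Finset.mem_coe,
    mem_WW a m n ha hm]
  constructor
  · rintro ⟨⟨h1, h2, rfl⟩, h4⟩
    obtain ⟨μ, rfl⟩ := up_surj a m γ h1
    obtain ⟨ν, rfl⟩ := up_surj a m σ h2
    refine ⟨(μ, ν), ?_, by simp [Phi, card_up]⟩
    rw [← h4]
    simp only [sum_up, card_up, Multiset.sum_replicate, smul_eq_mul]
    ring
  · rintro ⟨⟨μ, ν⟩, h, h'⟩
    simp only [Phi, Prod.mk.injEq] at h'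
    obtain ⟨rfl, rfl, rfl⟩ := h'
    refine ⟨⟨up_prop _ _ _, up_prop _ _ _, by simp [card_up]⟩, ?_⟩
    rw [← h]
    simp only [sum_up, Multiset.sum_replicate, smul_eq_mul]
    ring

theorem count_eq (a m n : ℕ) (ha : 0 < a) (hm : 0 < m) (P : ℕ → Prop) [DecidablePred P] :
    {t ∈ cpSet a a m n | P (Multiset.card t.1)}.ncard =
      ((WW a m n).filter fun p => P (Multiset.card p.1)).card := by
  rw [← Set.ncard_coe_finset, ← Set.ncard_image_of_injective _ (Phi_inj a m hm)]
  congr 1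
  rw [cpSet_eq a m n ha hm]
  ext t
  simp only [Set.mem_setOf_eq, Set.mem_image, Finset.coe_filter, Finset.mem_coe]
  constructor
  · rintro ⟨⟨p, hp, rfl⟩, h⟩
    exact ⟨p, ⟨hp, by simpa [Phi, card_up] using h⟩, rfl⟩
  · rintro ⟨p, ⟨hp, h⟩, rfl⟩
    exact ⟨⟨p, hp, rfl⟩, by simpa [Phi, card_up] using h⟩

theorem stmt17 (a m : ℕ) (ha : 0 < a) (hm : 0 < m) (n : ℕ) :
    cpOdd a a m n ≤ cpEven a a m n := by
  have h := sum_WW a m n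
  rw [cpOdd, cpEven, count_eq a m n ha hm Odd, count_eq a m n ha hm Even]
  rw [← Finset.sum_filter_add_sum_filter_not _ (fun p => Even (Multiset.card p.1))] at h
  have e1 : ∑ p ∈ (WW a m n).filter (fun p => Even (Multiset.card p.1)),
      (-1 : ℤ)^(Multiset.card p.1) =
      ((WW a m n).filter (fun p => Even (Multiset.card p.1))).card := by
    rw [Finset.card_eq_sum_ones]; push_cast
    apply Finset.sum_congr rfl
    intro p hp
    exact (Finset.mem_filter.1 hp).2.neg_one_pow
  have e2 : ∑ p ∈ (WW a m n).filter (fun p => ¬ Even (Multiset.card p.1)),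
      (-1 : ℤ)^(Multiset.card p.1) =
      - ((WW a m n).filter (fun p => Odd (Multiset.card p.1))).card := by
    rw [Finset.card_eq_sum_ones]; push_cast
    rw [← Finset.sum_neg_distrib]
    apply Finset.sum_congr
    · ext p; simp
    intro p hp
    exact (Finset.mem_filter.1 hp).2.neg_one_pow
  rw [e1, e2] at h
  omega
end

section
/- For all positive integers a and m and every nonnegative integer n, cp^e_{a,a,m}(n) − cp^o_{a,a,m}(n) equals the number of pairs (μ,ν) of partitions with |μ|+|ν| = n such that μ has distinct parts, every part of μ is ≥ 2a and ≡ 2a (mod m), and every part of ν is ≥ 2a and ≡ 2a (mod 2m). -/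
/-- generating function of objects satisfying `P`, graded by `w`, weighted by `f`. -/
noncomputable def gfun {α : Type} (P : α → Prop) (w : α → ℕ) (f : α → ℤ) : PowerSeries ℤ :=
  PowerSeries.mk fun n => ∑ᶠ p ∈ {p | P p ∧ w p = n}, f p

theorem gfun_split {α : Type} (P T U : α → Prop) (w : α → ℕ) (f : α → ℤ) (e : ℤ) (k : ℕ)
    (φ ψ : α → α)
    (hfin : ∀ n, {p | P p ∧ w p = n}.Finite)
    (hT : ∀ p, T p → P p)
    (hU : ∀ u, U u → P (φ u) ∧ ¬ T (φ u) ∧ ψ (φ u) = u ∧ w (φ u) = k + w u ∧ f (φ u) = e * f u)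
    (hS : ∀ p, P p → ¬ T p → U (ψ p) ∧ φ (ψ p) = p) :
    gfun P w f = gfun T w f + PowerSeries.C e * (PowerSeries.X ^ k * gfun U w f) := by
  ext n
  rw [map_add, PowerSeries.coeff_C_mul, PowerSeries.coeff_X_pow_mul']
  simp only [gfun, PowerSeries.coeff_mk]
  have hun : {p | P p ∧ w p = n} = {p | T p ∧ w p = n} ∪ {p | (P p ∧ ¬ T p) ∧ w p = n} := by
    ext p
    have := hT p
    simp only [Set.mem_ofPred_eq, Set.mem_union]
    tauto
  have hdis : Disjoint {p | T p ∧ w p = n} {p | (P p ∧ ¬ T p) ∧ w p = n} := by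
    rw [Set.disjoint_left]
    rintro p ⟨h, _⟩ ⟨⟨_, h'⟩, _⟩
    exact h' h
  have hf1 : {p | T p ∧ w p = n}.Finite := (hfin n).subset (by rw [hun]; exact Set.subset_union_left)
  have hf2 : {p | (P p ∧ ¬ T p) ∧ w p = n}.Finite :=
    (hfin n).subset (by rw [hun]; exact Set.subset_union_right)
  rw [hun, finsum_mem_union hdis hf1 hf2]
  congr 1
  split_ifs with hk
  · have hbij : Set.BijOn φ {p | U p ∧ w p = n - k} {p | (P p ∧ ¬ T p) ∧ w p = n} := by
      refine ⟨?_, ?_, ?_⟩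
      · rintro u ⟨hu, hw⟩
        obtain ⟨h1, h2, h3, h4, h5⟩ := hU u hu
        exact ⟨⟨h1, h2⟩, by omega⟩
      · rintro u ⟨hu, _⟩ v ⟨hv, _⟩ huv
        rw [← (hU u hu).2.2.1, ← (hU v hv).2.2.1, huv]
      · rintro p ⟨⟨h1, h2⟩, h3⟩
        obtain ⟨h4, h5⟩ := hS p h1 h2
        refine ⟨ψ p, ⟨h4, ?_⟩, h5⟩
        have := (hU _ h4).2.2.2.1
        rw [h5] at this
        omega
    have hfU : {p | U p ∧ w p = n - k}.Finite := by
      rw [hbij.finite_iff_finite]; exact hf2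
    rw [finsum_mem_eq_finite_toFinset_sum f hfU, Finset.mul_sum,
      ← finsum_mem_eq_finite_toFinset_sum (fun u => e * f u) hfU]
    symm
    exact finsum_mem_eq_of_bijOn φ hbij (fun u hu => ((hU u hu.1).2.2.2.2).symm)
  · have : {p | (P p ∧ ¬ T p) ∧ w p = n} = ∅ := by
      rw [Set.eq_empty_iff_forall_notMem]
      rintro p ⟨⟨h1, h2⟩, h3⟩
      obtain ⟨h4, h5⟩ := hS p h1 h2
      have := (hU _ h4).2.2.2.1
      rw [h5] at this
      omega
    rw [this]
    simp

theorem gfun_low {α : Type} (P : α → Prop) (w : α → ℕ) (f : α → ℤ) (z : α) (a : ℕ) (ha : 0 < a)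
    (hz : P z) (hw : w z = 0) (hf : f z = 1) (h : ∀ p, P p → p ≠ z → a ≤ w p) :
    (PowerSeries.X ^ a : PowerSeries ℤ) ∣ gfun P w f - 1 := by
  rw [PowerSeries.X_pow_dvd_iff]
  intro n hn
  rw [map_sub, PowerSeries.coeff_one]
  simp only [gfun, PowerSeries.coeff_mk]
  split_ifs with h0
  · have : {p | P p ∧ w p = n} = {z} := by
      ext p
      simp only [Set.mem_ofPred_eq, Set.mem_singleton_iff]
      constructor
      · rintro ⟨h1, h2⟩
        by_contra hne
        have := h p h1 hne
        omega
      · rintro rfl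
        exact ⟨hz, by omega⟩
    rw [this, finsum_mem_singleton, hf]; simp
  · have : {p | P p ∧ w p = n} = ∅ := by
      rw [Set.eq_empty_iff_forall_notMem]
      rintro p ⟨h1, h2⟩
      by_cases hp : p = z
      · subst hp; omega
      · have := h p h1 hp
        omega
    rw [this]; simp

/-- all parts are `≥ c` and `≡ c` mod `m`. -/
def Pt (c m : ℕ) (M : Multiset ℕ) : Prop := ∀ x ∈ M, c ≤ x ∧ x % m = c % m

theorem pt_succ {c m : ℕ} {M : Multiset ℕ} (hm : 0 < m) : Pt (c + m) m M ↔ Pt c m M ∧ c ∉ M := by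
  constructor
  · intro h
    refine ⟨fun x hx => ?_, fun hc => ?_⟩
    · obtain ⟨h1, h2⟩ := h x hx
      rw [Nat.add_mod_right] at h2
      exact ⟨by omega, h2⟩
    · have := (h c hc).1
      omega
  · rintro ⟨h, hc⟩ x hx
    obtain ⟨h1, h2⟩ := h x hx
    rw [Nat.add_mod_right]
    refine ⟨?_, h2⟩
    have hne : x ≠ c := fun e => hc (e ▸ hx)
    have hd : m ∣ x - c := (Nat.modEq_iff_dvd' h1).1 h2.symm
    have := Nat.le_of_dvd (by omega) hd
    omega

theorem pt_map_add {c m : ℕ} {M : Multiset ℕ} (h : Pt c m M) : Pt (c + m) m (M.map (· + m)) := by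
  intro x hx
  obtain ⟨y, hy, rfl⟩ := Multiset.mem_map.1 hx
  obtain ⟨h1, h2⟩ := h y hy
  simp only [Nat.add_mod_right]
  exact ⟨by omega, h2⟩

theorem pt_map_sub {c m : ℕ} {M : Multiset ℕ} (h : Pt (c + m) m M) : Pt c m (M.map (· - m)) := by
  intro x hx
  obtain ⟨y, hy, rfl⟩ := Multiset.mem_map.1 hx
  obtain ⟨h1, h2⟩ := h y hy
  refine ⟨by omega, ?_⟩
  obtain ⟨z, rfl⟩ := Nat.exists_eq_add_of_le' (show m ≤ y by omega)
  simpa using h2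

theorem map_add_sub (m : ℕ) (M : Multiset ℕ) : (M.map (· + m)).map (· - m) = M := by
  simp [Multiset.map_map]

theorem map_sub_add {c m : ℕ} {M : Multiset ℕ} (h : Pt (c + m) m M) :
    (M.map (· - m)).map (· + m) = M := by
  rw [Multiset.map_map]
  conv_rhs => rw [← Multiset.map_id M]
  apply Multiset.map_congr rfl
  intro x hx
  have := (h x hx).1
  simp only [Function.comp, id]
  omega

theorem sum_map_sub {c m : ℕ} {M : Multiset ℕ} (h : Pt (c + m) m M) :
    M.sum = (M.map (· - m)).sum + m * Multiset.card M := by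
  conv_lhs => rw [← map_sub_add h]
  rw [Multiset.sum_map_add]
  simp [mul_comm]

theorem pt_cons {c m : ℕ} {M : Multiset ℕ} (h : Pt c m M) : Pt c m (c ::ₘ M) := by
  intro x hx
  rcases Multiset.mem_cons.1 hx with rfl | hx
  · exact ⟨le_rfl, rfl⟩
  · exact h x hx

theorem pt_erase {c m d : ℕ} {M : Multiset ℕ} (h : Pt c m M) : Pt c m (M.erase d) :=
  fun x hx => h x (Multiset.mem_of_mem_erase hx)

theorem pt_le_sum {c m : ℕ} {M : Multiset ℕ} (h : Pt c m M) (h0 : M ≠ 0) : c ≤ M.sum := by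
  obtain ⟨x, hx⟩ := Multiset.exists_mem_of_ne_zero h0
  exact (h x hx).1.trans (Multiset.le_sum_of_mem hx)

theorem finite_pos (n : ℕ) : {M : Multiset ℕ | (∀ x ∈ M, 0 < x) ∧ M.sum ≤ n}.Finite := by
  apply (Set.finite_Iic (n • (Multiset.range (n + 1)))).subset
  rintro M ⟨h1, h2⟩
  rw [Set.mem_Iic, Multiset.le_iff_count]
  intro x
  by_cases hx : x ∈ M
  · have hxn : x ≤ n := (Multiset.le_sum_of_mem hx).trans h2
    have hc : Multiset.card M ≤ M.sum := by
      have := Multiset.card_nsmul_le_sum (s := M) (a := 1) (fun x hx => h1 x hx)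
      simpa using this
    have := Multiset.count_le_card x M
    rw [Multiset.count_nsmul,
      Multiset.count_eq_one_of_mem (Multiset.nodup_range _) (Multiset.mem_range.2 (by omega))]
    simp
    omega
  · rw [Multiset.count_eq_zero_of_notMem hx]; exact Nat.zero_le _

theorem finite_pairs (P : Multiset ℕ × Multiset ℕ → Prop) (w : Multiset ℕ × Multiset ℕ → ℕ)
    {a b m k : ℕ} (ha : 0 < a) (hb : 0 < b)
    (h : ∀ p, P p → Pt a m p.1 ∧ Pt b k p.2) (hw : ∀ p, p.1.sum + p.2.sum ≤ w p) (n : ℕ) :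
    {p | P p ∧ w p = n}.Finite := by
  apply ((finite_pos n).prod (finite_pos n)).subset
  rintro p ⟨hp, hn⟩
  obtain ⟨h1, h2⟩ := h p hp
  have := hw p
  exact ⟨⟨fun x hx => ha.trans_le (h1 x hx).1, by omega⟩,
    ⟨fun x hx => hb.trans_le (h2 x hx).1, by omega⟩⟩

def wG (m : ℕ) (p : Multiset ℕ × Multiset ℕ) : ℕ :=
  p.1.sum + p.2.sum + m * Multiset.card p.1 * Multiset.card p.2

def PG (m a b : ℕ) (p : Multiset ℕ × Multiset ℕ) : Prop := Pt a m p.1 ∧ Pt b m p.2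

def sgn (p : Multiset ℕ × Multiset ℕ) : ℤ := (-1) ^ Multiset.card p.1

noncomputable def G (m a b : ℕ) : PowerSeries ℤ := gfun (PG m a b) (wG m) sgn

def wR (p : Multiset ℕ × Multiset ℕ) : ℕ := p.1.sum + p.2.sum

def PR (m k a b : ℕ) (p : Multiset ℕ × Multiset ℕ) : Prop :=
  p.1.Nodup ∧ Pt a m p.1 ∧ Pt b k p.2

noncomputable def R (m k a b : ℕ) : PowerSeries ℤ := gfun (PR m k a b) wR (fun _ => 1)

theorem finG {m a b : ℕ} (ha : 0 < a) (hb : 0 < b) (n : ℕ) : {p | PG m a b p ∧ wG m p = n}.Finite :=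
  finite_pairs _ _ ha hb (fun _ h => h) (fun p => by simp [wG]) n

theorem finR {m k a b : ℕ} (ha : 0 < a) (hb : 0 < b) (n : ℕ) :
    {p | PR m k a b p ∧ wR p = n}.Finite :=
  finite_pairs _ _ ha hb (fun _ h => h.2) (fun p => by simp [wR]) n

theorem G_rec1 {m a b : ℕ} (hm : 0 < m) (ha : 0 < a) (hb : 0 < b) :
    G m a b = G m (a + m) b + PowerSeries.C (-1) * (PowerSeries.X ^ a * G m a (b + m)) := by
  apply gfun_split (φ := fun p => (a ::ₘ p.1, p.2.map (· - m)))
    (ψ := fun p => (p.1.erase a, p.2.map (· + m))) (hfin := finG ha hb)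
  · rintro p ⟨h1, h2⟩
    exact ⟨((pt_succ hm).1 h1).1, h2⟩
  · rintro ⟨γ, σ⟩ ⟨h1, h2⟩
    refine ⟨⟨pt_cons h1, pt_map_sub h2⟩, ?_, ?_, ?_, ?_⟩
    · rintro ⟨h, -⟩
      exact ((pt_succ hm).1 h).2 (by simp)
    · simp only [Multiset.erase_cons_head]
      rw [map_sub_add h2]
    · have := sum_map_sub h2
      simp only [wG, Multiset.sum_cons, Multiset.card_cons, Multiset.card_map] at this ⊢
      rw [this]; ring
    · simp [sgn, pow_succ]
  · rintro ⟨γ, σ⟩ ⟨h1, h2⟩ h3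
    have hmem : a ∈ γ := by
      by_contra hc
      exact h3 ⟨(pt_succ hm).2 ⟨h1, hc⟩, h2⟩
    refine ⟨⟨pt_erase h1, pt_map_add h2⟩, ?_⟩
    simp only [Multiset.cons_erase hmem]
    rw [map_add_sub]

theorem G_rec2 {m a b : ℕ} (hm : 0 < m) (ha : 0 < a) (hb : 0 < b) :
    G m a b = G m a (b + m) + PowerSeries.C 1 * (PowerSeries.X ^ b * G m (a + m) b) := by
  apply gfun_split (φ := fun p => (p.1.map (· - m), b ::ₘ p.2))
    (ψ := fun p => (p.1.map (· + m), p.2.erase b)) (hfin := finG ha hb)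
  · rintro p ⟨h1, h2⟩
    exact ⟨h1, ((pt_succ hm).1 h2).1⟩
  · rintro ⟨γ, σ⟩ ⟨h1, h2⟩
    refine ⟨⟨pt_map_sub h1, pt_cons h2⟩, ?_, ?_, ?_, ?_⟩
    · rintro ⟨-, h⟩
      exact ((pt_succ hm).1 h).2 (by simp)
    · simp only [Multiset.erase_cons_head]
      rw [map_sub_add h1]
    · have := sum_map_sub h1
      simp only [wG, Multiset.sum_cons, Multiset.card_cons, Multiset.card_map] at this ⊢
      rw [this]; ring
    · simp [sgn]
  · rintro ⟨γ, σ⟩ ⟨h1, h2⟩ h3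
    have hmem : b ∈ σ := by
      by_contra hc
      exact h3 ⟨h1, (pt_succ hm).2 ⟨h2, hc⟩⟩
    refine ⟨⟨pt_map_add h1, pt_erase h2⟩, ?_⟩
    simp only [Multiset.cons_erase hmem]
    rw [map_add_sub]

theorem R_rec1 {m k a b : ℕ} (hm : 0 < m) (ha : 0 < a) (hb : 0 < b) :
    R m k a b = R m k (a + m) b + PowerSeries.C 1 * (PowerSeries.X ^ a * R m k (a + m) b) := by
  apply gfun_split (φ := fun p => (a ::ₘ p.1, p.2))
    (ψ := fun p => (p.1.erase a, p.2)) (hfin := finR ha hb)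
  · rintro p ⟨h0, h1, h2⟩
    exact ⟨h0, ((pt_succ hm).1 h1).1, h2⟩
  · rintro ⟨γ, σ⟩ ⟨h0, h1, h2⟩
    have h1' := (pt_succ hm).1 h1
    refine ⟨⟨Multiset.nodup_cons.2 ⟨h1'.2, h0⟩, pt_cons h1'.1, h2⟩, ?_, ?_, ?_, ?_⟩
    · rintro ⟨-, h, -⟩
      exact ((pt_succ hm).1 h).2 (by simp)
    · simp only [Multiset.erase_cons_head]
    · simp only [wR, Multiset.sum_cons]
      ring
    · simp
  · rintro ⟨γ, σ⟩ ⟨h0, h1, h2⟩ h3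
    have hmem : a ∈ γ := by
      by_contra hc
      exact h3 ⟨h0, (pt_succ hm).2 ⟨h1, hc⟩, h2⟩
    refine ⟨⟨h0.erase a, (pt_succ hm).2 ⟨pt_erase h1, h0.notMem_erase⟩, h2⟩, ?_⟩
    simp only [Multiset.cons_erase hmem]

theorem R_rec2 {m k a b : ℕ} (hk : 0 < k) (ha : 0 < a) (hb : 0 < b) :
    R m k a b = R m k a (b + k) + PowerSeries.C 1 * (PowerSeries.X ^ b * R m k a b) := by
  apply gfun_split (φ := fun p => (p.1, b ::ₘ p.2))
    (ψ := fun p => (p.1, p.2.erase b)) (hfin := finR ha hb)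
  · rintro p ⟨h0, h1, h2⟩
    exact ⟨h0, h1, ((pt_succ hk).1 h2).1⟩
  · rintro ⟨γ, σ⟩ ⟨h0, h1, h2⟩
    refine ⟨⟨h0, h1, pt_cons h2⟩, ?_, ?_, ?_, ?_⟩
    · rintro ⟨-, -, h⟩
      exact ((pt_succ hk).1 h).2 (by simp)
    · simp only [Multiset.erase_cons_head]
    · simp only [wR, Multiset.sum_cons]
      ring
    · simp
  · rintro ⟨γ, σ⟩ ⟨h0, h1, h2⟩ h3
    have hmem : b ∈ σ := by
      by_contra hc
      exact h3 ⟨h0, h1, (pt_succ hk).2 ⟨h2, hc⟩⟩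
    refine ⟨⟨h0, h1, pt_erase h2⟩, ?_⟩
    simp only [Multiset.cons_erase hmem]

theorem isUnit_one_add {c : ℕ} (hc : 0 < c) (e : ℤ) :
    IsUnit (1 + PowerSeries.C e * PowerSeries.X ^ c : PowerSeries ℤ) := by
  rw [PowerSeries.isUnit_iff_constantCoeff]
  simp [hc.ne']

theorem G_step {m a : ℕ} (hm : 0 < m) (ha : 0 < a) :
    (1 - PowerSeries.X ^ (2 * a)) * G m a a =
      (1 + PowerSeries.X ^ (2 * a)) * (1 + PowerSeries.X ^ (2 * a + m)) * G m (a + m) (a + m) := by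
  have e1 := G_rec1 (b := a) hm ha ha
  have e2 := G_rec2 (b := a) hm ha ha
  have e3 := G_rec1 (a := a + m) (b := a) hm (by omega) ha
  have e4 := G_rec2 (a := a + m) (b := a) hm (by omega) ha
  simp only [map_neg, map_one, one_mul, neg_mul] at e1 e2 e3 e4
  have k1 : (1 + PowerSeries.X ^ a) * G m a a = (1 + PowerSeries.X ^ (2 * a)) * G m (a + m) a := by
    linear_combination e1 + PowerSeries.X ^ a * e2
  have k2 : (1 - PowerSeries.X ^ a) * G m (a + m) a =
      (1 + PowerSeries.X ^ (2 * a + m)) * G m (a + m) (a + m) := by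
    linear_combination e4 - PowerSeries.X ^ a * e3
  linear_combination (1 - PowerSeries.X ^ a) * k1 + (1 + PowerSeries.X ^ (2 * a)) * k2

theorem R_step {m a : ℕ} (hm : 0 < m) (ha : 0 < a) :
    (1 - PowerSeries.X ^ (2 * a)) * R m (2 * m) (2 * a) (2 * a) =
      (1 + PowerSeries.X ^ (2 * a)) * (1 + PowerSeries.X ^ (2 * a + m)) *
        R m (2 * m) (2 * (a + m)) (2 * (a + m)) := by
  have e1 := R_rec2 (m := m) (k := 2 * m) (a := 2 * a) (b := 2 * a) (by omega) (by omega) (by omega)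
  have e2 := R_rec1 (m := m) (k := 2 * m) (a := 2 * a) (b := 2 * a + 2 * m) hm (by omega) (by omega)
  have e3 := R_rec1 (m := m) (k := 2 * m) (a := 2 * a + m) (b := 2 * a + 2 * m) hm (by omega)
    (by omega)
  rw [show 2 * a + m + m = 2 * (a + m) by ring] at e3
  simp only [map_one, one_mul] at e1 e2 e3
  rw [show 2 * a + 2 * m = 2 * (a + m) by ring] at e1 e2 e3
  linear_combination e1 + e2 + (1 + PowerSeries.X ^ (2 * a)) * e3

theorem G_low {m a : ℕ} (ha : 0 < a) : (PowerSeries.X ^ a : PowerSeries ℤ) ∣ G m a a - 1 := by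
  apply gfun_low (z := (0, 0)) (ha := ha)
  · simp [PG, Pt]
  · simp [wG]
  · simp [sgn]
  · rintro ⟨γ, σ⟩ ⟨h1, h2⟩ h3
    simp only [wG]
    by_cases h : γ = 0
    · have : σ ≠ 0 := by rintro rfl; exact h3 (by rw [h])
      have := pt_le_sum h2 this
      simp only at this
      omega
    · have := pt_le_sum h1 h
      simp only at this
      omega

theorem R_low {m k a : ℕ} (ha : 0 < a) :
    (PowerSeries.X ^ a : PowerSeries ℤ) ∣ R m k (2 * a) (2 * a) - 1 := by
  apply gfun_low (z := (0, 0)) (ha := ha)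
  · simp [PR, Pt]
  · simp [wR]
  · simp
  · rintro ⟨γ, σ⟩ ⟨h0, h1, h2⟩ h3
    simp only [wR]
    by_cases h : γ = 0
    · have : σ ≠ 0 := by rintro rfl; exact h3 (by rw [h])
      have := pt_le_sum h2 this
      simp only at this
      omega
    · have := pt_le_sum h1 h
      simp only at this
      omega

theorem diff_dvd {m : ℕ} (hm : 0 < m) (j : ℕ) : ∀ a, 0 < a →
    (PowerSeries.X ^ (a + j * m) : PowerSeries ℤ) ∣ G m a a - R m (2 * m) (2 * a) (2 * a) := by
  induction j with
  | zero =>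
    intro a ha
    have := dvd_sub (G_low (m := m) ha) (R_low (m := m) (k := 2 * m) ha)
    simpa using this
  | succ j ih =>
    intro a ha
    have h := ih (a + m) (by omega)
    have hu := isUnit_one_add (c := 2 * a) (by omega) (-1)
    rw [← hu.dvd_mul_left]
    have : (1 + PowerSeries.C (-1) * PowerSeries.X ^ (2 * a) : PowerSeries ℤ) *
        (G m a a - R m (2 * m) (2 * a) (2 * a)) =
        ((1 + PowerSeries.X ^ (2 * a)) * (1 + PowerSeries.X ^ (2 * a + m))) *
        (G m (a + m) (a + m) - R m (2 * m) (2 * (a + m)) (2 * (a + m))) := by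
      simp only [map_neg, map_one]
      linear_combination G_step hm ha - R_step hm ha
    rw [this, show a + (j + 1) * m = a + m + j * m by ring]
    exact h.mul_left _

theorem G_eq_R {m a : ℕ} (hm : 0 < m) (ha : 0 < a) : G m a a = R m (2 * m) (2 * a) (2 * a) := by
  rw [← sub_eq_zero]
  ext n
  have h := diff_dvd hm n a ha
  rw [PowerSeries.X_pow_dvd_iff] at h
  rw [h n (by nlinarith), map_zero]

theorem ncard_aux (a m n : ℕ) (Q : ℕ → Prop) :
    {t ∈ cpSet a a m n | Q (Multiset.card t.1)}.ncard =
      {p | (PG m a a p ∧ wG m p = n) ∧ Q (Multiset.card p.1)}.ncard := by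
  symm
  apply Set.ncard_congr
    (fun p _ => (p.1, Multiset.replicate (Multiset.card p.2) (m * Multiset.card p.1), p.2))
  · rintro ⟨γ, σ⟩ ⟨⟨⟨h1, h2⟩, h3⟩, h4⟩
    refine ⟨⟨⟨h1, h2, rfl⟩, ?_⟩, h4⟩
    simp only [wG] at h3
    simp only [Multiset.sum_replicate, smul_eq_mul]
    rw [← h3]; ring
  · rintro ⟨γ, σ⟩ ⟨γ', σ'⟩ _ _ h
    simp only [Prod.mk.injEq] at h ⊢
    exact ⟨h.1, h.2.2⟩
  · rintro ⟨γ, ρ, σ⟩ ⟨⟨⟨h1, h2, h3⟩, h4⟩, h5⟩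
    simp only at h1 h2 h3 h4 h5
    subst h3
    refine ⟨(γ, σ), ⟨⟨⟨h1, h2⟩, ?_⟩, h5⟩, rfl⟩
    simp only [Multiset.sum_replicate, smul_eq_mul] at h4
    simp only [wG]
    rw [← h4]; ring

theorem coeff_G {m a : ℕ} (ha : 0 < a) (n : ℕ) :
    PowerSeries.coeff n (G m a a) = (cpEven a a m n : ℤ) - (cpOdd a a m n : ℤ) := by
  rw [cpEven, cpOdd, ncard_aux a m n Even, ncard_aux a m n Odd]
  simp only [G, gfun, PowerSeries.coeff_mk]
  have hfin := finG (m := m) ha ha n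
  have hun : {p | PG m a a p ∧ wG m p = n} =
      {p | (PG m a a p ∧ wG m p = n) ∧ Even (Multiset.card p.1)} ∪
      {p | (PG m a a p ∧ wG m p = n) ∧ Odd (Multiset.card p.1)} := by
    ext p
    have := Nat.even_or_odd (Multiset.card p.1)
    simp only [Set.mem_ofPred_eq, Set.mem_union]
    tauto
  have hdis : Disjoint {p | (PG m a a p ∧ wG m p = n) ∧ Even (Multiset.card p.1)}
      {p | (PG m a a p ∧ wG m p = n) ∧ Odd (Multiset.card p.1)} := by
    rw [Set.disjoint_left]
    rintro p ⟨_, h⟩ ⟨_, h'⟩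
    exact (Nat.not_even_iff_odd.2 h') h
  have hE : {p | (PG m a a p ∧ wG m p = n) ∧ Even (Multiset.card p.1)}.Finite :=
    hfin.subset fun _ h => h.1
  have hO : {p | (PG m a a p ∧ wG m p = n) ∧ Odd (Multiset.card p.1)}.Finite :=
    hfin.subset fun _ h => h.1
  rw [hun, finsum_mem_union hdis hE hO, sub_eq_add_neg]
  congr 1
  · rw [finsum_mem_congr rfl (g := fun _ => (1 : ℤ)) (fun p hp => by simp [sgn, hp.2.neg_one_pow]),
      finsum_mem_eq_finite_toFinset_sum _ hE, Set.ncard_eq_toFinset_card _ hE]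
    simp
  · rw [finsum_mem_congr rfl (g := fun _ => (-1 : ℤ)) (fun p hp => by simp [sgn, hp.2.neg_one_pow]),
      finsum_mem_eq_finite_toFinset_sum _ hO, Set.ncard_eq_toFinset_card _ hO]
    simp

theorem stmt18 (a m : ℕ) (ha : 0 < a) (hm : 0 < m) (n : ℕ) :
    (cpEven a a m n : ℤ) - (cpOdd a a m n : ℤ) =
      ({p : Multiset ℕ × Multiset ℕ |
         p.1.Nodup ∧ (∀ x ∈ p.1, 2 * a ≤ x ∧ x % m = (2 * a) % m) ∧
         (∀ x ∈ p.2, 2 * a ≤ x ∧ x % (2 * m) = (2 * a) % (2 * m)) ∧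
         p.1.sum + p.2.sum = n}).ncard := by
  rw [← coeff_G ha, G_eq_R hm ha]
  have hset : {p : Multiset ℕ × Multiset ℕ |
         p.1.Nodup ∧ (∀ x ∈ p.1, 2 * a ≤ x ∧ x % m = (2 * a) % m) ∧
         (∀ x ∈ p.2, 2 * a ≤ x ∧ x % (2 * m) = (2 * a) % (2 * m)) ∧
         p.1.sum + p.2.sum = n} = {p | PR m (2 * m) (2 * a) (2 * a) p ∧ wR p = n} := by
    ext p
    simp only [Set.mem_ofPred_eq, PR, Pt, wR, and_assoc]
  have hfin := finR (m := m) (k := 2 * m) (a := 2 * a) (b := 2 * a) (by omega) (by omega) n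
  rw [hset]
  simp only [R, gfun, PowerSeries.coeff_mk]
  rw [finsum_mem_eq_finite_toFinset_sum _ hfin, Set.ncard_eq_toFinset_card _ hfin]
  simp
end
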